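/- arXiv:1607.06883 — 8 statements merged into one kernel-verified Lean document; each statement's English description precedes it below -/
import Mathlib

section
/- There exists a constant c > 0 such that the following holds for every n ≥ 1. Let G be a finite connected simple graph on n vertices with an injective real-valued edge-weight function, and let T be its unique minimum spanning tree. Then there exists a partition of the vertex set of G into at most ⌈√n⌉ parts such that every part induces a connected subgraph of T whose unweighted diameter is at most c·√n; in other words, G admits a (⌈√n⌉, O(√n))-MST forest. -/
/-- The total weight of (the edges of) a graph `T` under edge-weight function `w`. -/
noncomputable def mstWeight {V : Type*} (w : Sym2 V → ℝ) (T : SimpleGraph V) : ℝ :=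
  ∑ᶠ e ∈ T.edgeSet, w e

theorem tree_forest_aux {V : Type} [Fintype V] (T : SimpleGraph V) (hT : T.Connected)
    (s : ℕ) (hs : 1 ≤ s) (hn : Fintype.card V ≤ s * s) :
    ∃ P : Finset (Set V), Setoid.IsPartition (↑P : Set (Set V)) ∧ P.card ≤ s ∧
      ∀ F ∈ P, (T.induce F).Connected ∧ (T.induce F).diam ≤ 4 * s := by
  classical
  obtain ⟨r⟩ := hT.nonempty
  have hpar : ∀ v, ∃ u, (v = r → u = r) ∧ (v ≠ r → T.Adj v u) ∧ T.dist u r = T.dist v r - 1 := by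
    intro v
    by_cases hv : v = r
    · exact ⟨r, by simp, by simp [hv], by simp [hv]⟩
    · obtain ⟨q, hq⟩ := hT.exists_walk_length_eq_dist v r
      cases q with
      | nil => exact absurd rfl hv
      | @cons _ u _ h q' =>
        refine ⟨u, fun e => absurd e hv, fun _ => h, ?_⟩
        have h1 := SimpleGraph.dist_le q'
        have h2 : T.dist v r ≤ 1 + T.dist u r := by
          have := hT.dist_triangle (u := v) (v := u) (w := r)
          rwa [SimpleGraph.dist_eq_one_iff_adj.mpr h] at this
        simp only [SimpleGraph.Walk.length_cons] at hq
        omega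
  choose p hp0 hpadj hpd using hpar
  set d : V → ℕ := fun v => T.dist v r with hd
  have hd0 : ∀ v, d v = 0 → v = r := fun v h => (hT.dist_eq_zero_iff).1 h
  have hdr : d r = 0 := by simp [hd]
  have hdk : ∀ k v, d (p^[k] v) = d v - k := by
    intro k
    induction k with
    | zero => intro v; simp
    | succ k ih =>
      intro v
      rw [Function.iterate_succ_apply, ih]
      have : d (p v) = d v - 1 := hpd v
      omega
  let C : V → Prop := fun v => v = r ∨ (s ∣ d v ∧ ∃ u, d u = d v + (s - 1) ∧ p^[s-1] u = v)
  have hex : ∀ v, ∃ k, k ≤ 2 * s ∧ C (p^[k] v) := by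
    intro v
    by_cases h : d v < s - 1
    · refine ⟨d v, by omega, Or.inl (hd0 _ ?_)⟩
      rw [hdk]; omega
    · have hm := Nat.mod_lt (d v - (s - 1)) hs
      have hdm := Nat.div_add_mod (d v - (s - 1)) s
      set m := (d v - (s - 1)) % s with hmdef
      have e : d v - ((s - 1) + m) = s * ((d v - (s - 1)) / s) := by omega
      refine ⟨(s - 1) + m, by omega, Or.inr ⟨?_, p^[m] v, ?_, ?_⟩⟩
      · rw [hdk, e]; exact dvd_mul_right _ _
      · rw [hdk, hdk]
        have : m ≤ d v - (s - 1) := Nat.mod_le _ _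
        omega
      · rw [← Function.iterate_add_apply]
  have hex' : ∀ v, ∃ k, C (p^[k] v) := fun v => (hex v).imp fun _ h => h.2
  let K : V → ℕ := fun v => Nat.find (hex' v)
  have hK : ∀ v, K v ≤ 2 * s := by
    intro v
    obtain ⟨k, h1, h2⟩ := hex v
    exact (Nat.find_min' (hex' v) h2).trans h1
  let cl : V → V := fun v => p^[K v] v
  have hclC : ∀ v, C (cl v) := fun v => Nat.find_spec (hex' v)
  have hKC : ∀ v, C v → K v = 0 := fun v h => (Nat.find_eq_zero (hex' v)).2 h
  have hclc : ∀ v, C v → cl v = v := by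
    intro v h
    simp only [cl, hKC v h, Function.iterate_zero, id]
  have hKs : ∀ v k, K v = k + 1 → K (p v) = k := by
    intro v k h
    refine (Nat.find_eq_iff _).2 ⟨?_, ?_⟩
    · have := hclC v
      simp only [cl, h, Function.iterate_succ_apply] at this
      exact this
    · intro j hj hc
      have : K v ≤ j + 1 := Nat.find_min' (hex' v) (by rwa [Function.iterate_succ_apply])
      omega
  let S : Finset V := Finset.univ.filter C
  have hS : S.card ≤ s := by
    by_cases hone : ∀ v, C v → v = r
    · have : S ⊆ {r} := by
        intro v hv
        simp only [S, Finset.mem_filter] at hv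
        simpa using hone v hv.2
      have := Finset.card_le_card this
      simp at this; omega
    · push Not at hone
      obtain ⟨v, hv, hvr⟩ := hone
      have hall : ∀ c, C c → s ∣ d c ∧ ∃ u, d u = d c + (s - 1) ∧ p^[s-1] u = c := by
        intro c hc
        rcases hc with rfl | hc
        · obtain h | ⟨h1, u, h2, h3⟩ := hv
          · exact absurd h hvr
          · refine ⟨by simp [hdr], p^[d u - (s-1)] u, ?_, ?_⟩
            · rw [hdk, hdr]; omega
            · apply hd0
              rw [hdk, hdk]; omega
        · exact hc
      have hall' : ∀ c : V, ∃ u, C c → s ∣ d c ∧ d u = d c + (s - 1) ∧ p^[s-1] u = c := by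
        intro c
        by_cases hc : C c
        · obtain ⟨h1, u, h⟩ := hall c hc
          exact ⟨u, fun _ => ⟨h1, h⟩⟩
        · exact ⟨c, fun h => absurd h hc⟩
      choose U hU using hall'
      have key : (S ×ˢ Finset.range s).card ≤ (Finset.univ : Finset V).card := by
        apply Finset.card_le_card_of_injOn (fun x => p^[x.2] (U x.1)) (by simp)
        rintro ⟨c, i⟩ hc ⟨c', i'⟩ hc' heq
        simp only [S, Finset.coe_product, Set.mem_prod, Finset.mem_coe, Finset.mem_filter,
          Finset.mem_univ, true_and, Finset.mem_range] at hc hc' heq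
        obtain ⟨⟨a, ha⟩, h2, h3⟩ := hU c hc.1
        obtain ⟨⟨a', ha'⟩, h2', h3'⟩ := hU c' hc'.1
        have hi := hc.2
        have hi' := hc'.2
        have e := congrArg d heq
        rw [hdk, hdk, h2, h2', ha, ha'] at e
        have e2 : s * a + (s - 1 - i) = s * a' + (s - 1 - i') := by omega
        have e3 := congrArg (· % s) e2
        simp only [Nat.mul_add_mod] at e3
        rw [Nat.mod_eq_of_lt (by omega), Nat.mod_eq_of_lt (by omega)] at e3
        have hii : i = i' := by omega
        subst hii
        have := congrArg (p^[s-1-i]) heq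
        rw [← Function.iterate_add_apply, ← Function.iterate_add_apply,
          show s - 1 - i + i = s - 1 by omega, h3, h3'] at this
        rw [this]
      rw [Finset.card_product, Finset.card_range, Finset.card_univ] at key
      exact Nat.le_of_mul_le_mul_right (key.trans hn) hs
  refine ⟨S.image (fun c => {v | cl v = c}), ?_, Finset.card_image_le.trans hS, ?_⟩
  · constructor
    · simp only [Finset.coe_image, Set.mem_image, Finset.mem_coe, not_exists, not_and]
      intro c hc h
      have : c ∈ {v | cl v = c} := hclc c (by simpa [S] using hc)
      rw [h] at this; exact this
    · intro a
      refine ⟨{v | cl v = cl a}, ⟨?_, rfl⟩, ?_⟩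
      · simp only [Finset.coe_image, Set.mem_image, Finset.mem_coe]
        exact ⟨cl a, by simpa [S] using hclC a, rfl⟩
      · rintro F ⟨hF, ha⟩
        simp only [Finset.coe_image, Set.mem_image, Finset.mem_coe] at hF
        obtain ⟨c, -, rfl⟩ := hF
        have : cl a = c := ha
        rw [this]
  · intro F hF
    obtain ⟨c, hc, rfl⟩ := Finset.mem_image.1 hF
    have hc : C c := by simpa [S] using hc
    have hwalk : ∀ k v (hv : cl v = c), K v = k →
        ∃ q : (T.induce {v | cl v = c}).Walk ⟨v, hv⟩ ⟨c, hclc c hc⟩, q.length = k := by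
      intro k
      induction k with
      | zero =>
        intro v hv h
        have : v = c := by simpa [cl, h] using hv
        subst this
        exact ⟨SimpleGraph.Walk.nil, rfl⟩
      | succ k ih =>
        intro v hv h
        have h1 := hKs v k h
        have h2 : cl (p v) = c := by
          rw [← hv]
          simp only [cl, h1, h, Function.iterate_succ_apply]
        obtain ⟨q, hq⟩ := ih (p v) h2 h1
        have hvr : v ≠ r := by
          intro e
          have := hKC v (Or.inl e)
          omega
        have hadj : (T.induce {v | cl v = c}).Adj ⟨v, hv⟩ ⟨p v, h2⟩ := hpadj v hvr
        exact ⟨SimpleGraph.Walk.cons hadj q, by simp [hq]⟩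
    have : Nonempty ({v | cl v = c} : Set V) := ⟨⟨c, hclc c hc⟩⟩
    have hconn : (T.induce {v | cl v = c}).Connected := by
      rw [SimpleGraph.connected_iff_exists_forall_reachable]
      refine ⟨⟨c, hclc c hc⟩, fun v => ?_⟩
      obtain ⟨q, -⟩ := hwalk _ v.1 v.2 rfl
      exact q.reachable.symm
    refine ⟨hconn, ?_⟩
    obtain ⟨u, v, huv⟩ := SimpleGraph.exists_dist_eq_diam (G := T.induce {v | cl v = c})
    rw [← huv]
    obtain ⟨q, hq⟩ := hwalk _ u.1 u.2 rfl
    obtain ⟨q', hq'⟩ := hwalk _ v.1 v.2 rfl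
    have := SimpleGraph.dist_le (q.append q'.reverse)
    rw [SimpleGraph.Walk.length_append, SimpleGraph.Walk.length_reverse, hq, hq'] at this
    have h1 := hK u
    have h2 := hK v
    exact this.trans (by omega)

/-- There is a constant `c > 0` such that for every `n ≥ 1`, every finite connected simple
graph `G` on `n` vertices with injective real edge weights, with (unique) minimum spanning
tree `T`, admits a partition of its vertex set into at most `⌈√n⌉` parts, each of which
induces a connected subgraph of `T` of unweighted (strong) diameter at most `c·√n`;
i.e., `G` admits a `(⌈√n⌉, O(√n))`-MST forest. -/
theorem mst_forest_exists :
    ∃ c : ℝ, 0 < c ∧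
      ∀ (n : ℕ), 1 ≤ n →
      ∀ (V : Type) [Fintype V], Fintype.card V = n →
      ∀ (G : SimpleGraph V), G.Connected →
      ∀ (w : Sym2 V → ℝ), Set.InjOn w G.edgeSet →
      ∀ (T : SimpleGraph V), T ≤ G → T.IsTree →
        (∀ T' : SimpleGraph V, T' ≤ G → T'.IsTree → mstWeight w T ≤ mstWeight w T') →
      ∃ P : Finset (Set V),
        Setoid.IsPartition (↑P : Set (Set V)) ∧
        P.card ≤ ⌈Real.sqrt n⌉₊ ∧
        ∀ F ∈ P, (T.induce F).Connected ∧
          ((T.induce F).diam : ℝ) ≤ c * Real.sqrt n := by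
  refine ⟨8, by norm_num, ?_⟩
  intro n hn V _ hV G _ w _ T _ hT _
  have h1 : (1 : ℝ) ≤ Real.sqrt n := by
    rw [Real.one_le_sqrt]; exact_mod_cast hn
  have hle := Nat.le_ceil (Real.sqrt n)
  have hlt := Nat.ceil_lt_add_one (Real.sqrt_nonneg (n : ℝ))
  have hs : 1 ≤ ⌈Real.sqrt n⌉₊ := by
    have : (1 : ℝ) ≤ (⌈Real.sqrt n⌉₊ : ℝ) := h1.trans hle
    exact_mod_cast this
  have hss : Fintype.card V ≤ ⌈Real.sqrt n⌉₊ * ⌈Real.sqrt n⌉₊ := by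
    rw [hV]
    have h2 := Real.mul_self_sqrt (Nat.cast_nonneg (α := ℝ) n)
    have : (n : ℝ) ≤ (⌈Real.sqrt n⌉₊ : ℝ) * (⌈Real.sqrt n⌉₊ : ℝ) := by nlinarith
    exact_mod_cast this
  obtain ⟨P, hP, hc, hF⟩ := tree_forest_aux T hT.connected _ hs hss
  refine ⟨P, hP, hc, fun F h => ⟨(hF F h).1, ?_⟩⟩
  have h3 : ((T.induce F).diam : ℝ) ≤ 4 * (⌈Real.sqrt n⌉₊ : ℝ) := by
    exact_mod_cast (hF F h).2
  linarith
end

section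
/- There exists a constant c > 0 such that every finite tree T on n ≥ 1 vertices admits a partition of its vertex set into at most ⌈√n⌉ parts, each of which induces a connected subtree of T of unweighted diameter at most c·√n. -/
theorem tp_aux (V : Type) [Fintype V] (T : SimpleGraph V) (hT : T.Connected) (L : ℕ)
    (hL : 1 ≤ L) (hn : Fintype.card V ≤ L * L) :
    ∃ P : Finset (Set V), Setoid.IsPartition (↑P : Set (Set V)) ∧ P.card ≤ L ∧
      ∀ F ∈ P, (T.induce F).Connected ∧ (T.induce F).diam ≤ 4 * L := by
  classical
  obtain ⟨r⟩ := hT.nonempty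
  obtain ⟨d, hd⟩ : ∃ d : V → ℕ, d = T.dist r := ⟨_, rfl⟩
  have hd0 : ∀ v, d v = 0 → v = r := by
    intro v h
    rw [hd] at h
    exact ((hT.dist_eq_zero_iff).1 h).symm
  have hdr : d r = 0 := by simp [hd]
  have hpex : ∀ v, ∃ w, d w = d v - 1 ∧ (v ≠ r → T.Adj v w) := by
    intro v
    by_cases hv : v = r
    · exact ⟨r, by simp [hv, hdr], fun h => absurd hv h⟩
    · obtain ⟨W, hW⟩ := hT.exists_walk_length_eq_dist v r
      cases W with
      | nil => exact absurd rfl hv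
      | cons h q =>
        rename_i w
        refine ⟨w, ?_, fun _ => h⟩
        have h1 : T.dist w r ≤ q.length := SimpleGraph.dist_le q
        have h2 : T.dist v r ≤ T.dist v w + T.dist w r := hT.dist_triangle
        have h3 : T.dist v w = 1 := SimpleGraph.dist_eq_one_iff_adj.2 h
        simp only [SimpleGraph.Walk.length_cons] at hW
        rw [hd, SimpleGraph.dist_comm (u := r) (v := w), SimpleGraph.dist_comm (u := r) (v := v)]
        omega
  choose p hp hadj using hpex
  have hpi : ∀ i v, d (p^[i] v) = d v - i := by
    intro i
    induction i with
    | zero => simp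
    | succ i ih => intro v; rw [Function.iterate_succ_apply, ih, hp]; omega
  obtain ⟨C2, hC2⟩ : ∃ C2 : V → Prop, ∀ c, C2 c ↔
    (L ∣ d c ∧ ∃ w, p^[L-1] w = c ∧ d w = d c + (L-1)) := ⟨_, fun _ => Iff.rfl⟩
  obtain ⟨C, hC⟩ : ∃ C : V → Prop, ∀ c, C c ↔ (c = r ∨ C2 c) := ⟨_, fun _ => Iff.rfl⟩
  have hroot : ∀ v, C (p^[d v] v) := by
    intro v
    rw [hC]; left; apply hd0; rw [hpi]; omega
  have hex : ∀ v, ∃ i, C (p^[i] v) := fun v => ⟨d v, hroot v⟩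
  obtain ⟨k, hk⟩ : ∃ k : V → ℕ, ∀ v, k v = Nat.find (hex v) := ⟨_, fun _ => rfl⟩
  have hkC : ∀ v, C (p^[k v] v) := fun v => by rw [hk]; exact Nat.find_spec (hex v)
  have hkle : ∀ v i, C (p^[i] v) → k v ≤ i := fun v i h => by
    rw [hk]; exact Nat.find_min' (hex v) h
  have hk0 : ∀ v, C v → k v = 0 := fun v h => Nat.le_zero.1 (hkle v 0 h)
  have hks : ∀ v n, k v = n + 1 → k (p v) = n := by
    intro v n h
    have h1 : k (p v) ≤ n := by
      apply hkle
      have := hkC v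
      rwa [h, Function.iterate_succ_apply] at this
    have h2 : k v ≤ k (p v) + 1 := by
      apply hkle
      rw [Function.iterate_succ_apply]; exact hkC _
    omega
  have hkb : ∀ v, k v < 2 * L := by
    intro v
    by_cases h : d v < 2 * L
    · exact lt_of_le_of_lt (hkle v _ (hroot v)) h
    · have hm : (d v - (L-1)) % L < L := Nat.mod_lt _ hL
      have hdiv := Nat.mod_add_div (d v - (L-1)) L
      generalize (d v - (L-1)) % L = m at hm hdiv
      have : k v ≤ L - 1 + m := by
        apply hkle
        rw [hC, hC2]; right
        refine ⟨?_, p^[m] v, ?_, ?_⟩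
        · rw [hpi]
          exact ⟨(d v - (L-1)) / L, by omega⟩
        · rw [← Function.iterate_add_apply]
        · rw [hpi, hpi]; omega
      omega
  obtain ⟨f, hf⟩ : ∃ f : V → V, ∀ v, f v = p^[k v] v := ⟨_, fun _ => rfl⟩
  have hfC : ∀ v, C (f v) := fun v => by rw [hf]; exact hkC v
  have hfc : ∀ c, C c → f c = c := fun c h => by rw [hf, hk0 c h]; rfl
  have hfp : ∀ v n, k v = n + 1 → f (p v) = f v := fun v n h => by
    rw [hf, hf, h, hks v n h, Function.iterate_succ_apply]
  refine ⟨(Finset.univ.filter C).image (fun c => {v | f v = c}), ⟨?_, ?_⟩, ?_, ?_⟩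
  · intro h
    simp only [Finset.coe_image, Finset.coe_filter, Set.mem_image] at h
    obtain ⟨c, hc, he⟩ := h
    have : c ∈ ({v | f v = c} : Set V) := hfc c (by simpa using hc)
    rw [he] at this
    exact this
  · intro a
    refine ⟨{v | f v = f a}, ⟨?_, rfl⟩, ?_⟩
    · simp only [Finset.coe_image, Finset.coe_filter, Set.mem_image]
      exact ⟨f a, by simpa using hfC a, rfl⟩
    · rintro b ⟨hb, hab⟩
      simp only [Finset.coe_image, Finset.coe_filter, Set.mem_image] at hb
      obtain ⟨c, hc, rfl⟩ := hb
      have : f a = c := hab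
      rw [this]
  · refine Finset.card_image_le.trans ?_
    by_cases hw : ∃ w, L - 1 ≤ d w
    · obtain ⟨w, hw⟩ := hw
      have hr2 : C2 r := by
        rw [hC2]
        refine ⟨by simp [hdr], p^[d w - (L-1)] w, ?_, ?_⟩
        · apply hd0; rw [hpi, hpi]; omega
        · rw [hpi, hdr]; omega
      have hCC : ∀ c, C c → (L ∣ d c ∧ ∃ w, p^[L-1] w = c ∧ d w = d c + (L-1)) := by
        intro c h
        rw [← hC2]
        rcases (hC c).1 h with h | h
        · rw [h]; exact hr2
        · exact h
      choose! hdv g hg hgd using hCC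
      have hinj : ((Finset.univ.filter C) ×ˢ (Finset.range L)).card ≤ (Finset.univ : Finset V).card := by
        apply Finset.card_le_card_of_injOn (fun x => p^[x.2] (g x.1)) (by simp)
        rintro ⟨c, i⟩ hc ⟨c', i'⟩ hc' he
        simp only [Finset.coe_product, Set.mem_prod, Finset.mem_coe, Finset.mem_filter,
          Finset.mem_univ, true_and, Finset.mem_range] at hc hc'
        simp only at he
        have h1 := congrArg d he
        rw [hpi, hpi, hgd c hc.1, hgd c' hc'.1] at h1
        obtain ⟨a, ha⟩ := hdv c hc.1
        obtain ⟨b, hb⟩ := hdv c' hc'.1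
        have hci := hc.2
        have hci' := hc'.2
        rw [ha, hb] at h1
        have hab : a = b := by
          have h2 : (L * a + (L - 1 - i)) / L = (L * b + (L - 1 - i')) / L := by
            congr 1; omega
          rwa [Nat.mul_add_div (by omega), Nat.mul_add_div (by omega),
            Nat.div_eq_of_lt (by omega), Nat.div_eq_of_lt (by omega)] at h2
        subst hab
        have hii : i = i' := by omega
        subst hii
        have h3 := congrArg (p^[L-1-i]) he
        rw [← Function.iterate_add_apply, ← Function.iterate_add_apply,
          Nat.sub_add_cancel (by omega), hg c hc.1, hg c' hc'.1] at h3
        rw [h3]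
      rw [Finset.card_product, Finset.card_range, Finset.card_univ] at hinj
      exact Nat.le_of_mul_le_mul_right (hinj.trans hn) hL
    · push Not at hw
      refine le_trans (Finset.card_le_one.2 ?_) hL
      have : ∀ c, C c → c = r := by
        intro c h
        rcases (hC c).1 h with h | h
        · exact h
        · obtain ⟨_, w, _, h2⟩ := (hC2 c).1 h
          have := hw w
          omega
      intro a ha b hb
      rw [this a (by simpa using ha), this b (by simpa using hb)]
  · intro F hF
    simp only [Finset.mem_image, Finset.mem_filter, Finset.mem_univ, true_and] at hF
    obtain ⟨c, hc, rfl⟩ := hF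
    have hcF : c ∈ ({v | f v = c} : Set V) := hfc c hc
    have key : ∀ n v (hv : v ∈ ({v | f v = c} : Set V)), k v = n →
        ∃ W : (T.induce {v | f v = c}).Walk ⟨v, hv⟩ ⟨c, hcF⟩, W.length = n := by
      intro n
      induction n with
      | zero =>
        intro v hv h
        have : v = c := by
          have h1 : f v = c := hv
          rw [hf, h] at h1; exact h1
        subst this
        exact ⟨SimpleGraph.Walk.nil, rfl⟩
      | succ n ih =>
        intro v hv h
        have hv' : p v ∈ ({v | f v = c} : Set V) := (hfp v n h).trans hv
        obtain ⟨W, hW⟩ := ih (p v) hv' (hks v n h)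
        have hvr : v ≠ r := by
          intro he
          have := hk0 v ((hC v).2 (Or.inl he))
          omega
        have ha : (T.induce {v | f v = c}).Adj ⟨v, hv⟩ ⟨p v, hv'⟩ := hadj v hvr
        exact ⟨SimpleGraph.Walk.cons ha W, by simp [hW]⟩
    haveI : Nonempty ({v | f v = c} : Set V) := ⟨⟨c, hcF⟩⟩
    refine ⟨⟨?_⟩, ?_⟩
    · rintro ⟨u, hu⟩ ⟨v, hv⟩
      obtain ⟨W, _⟩ := key _ u hu rfl
      obtain ⟨W', _⟩ := key _ v hv rfl
      exact ⟨W.append W'.reverse⟩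
    · obtain ⟨⟨u, hu⟩, ⟨v, hv⟩, h⟩ := (T.induce {v | f v = c}).exists_dist_eq_diam
      obtain ⟨W, hW⟩ := key _ u hu rfl
      obtain ⟨W', hW'⟩ := key _ v hv rfl
      rw [← h]
      have h1 := SimpleGraph.dist_le (W.append W'.reverse)
      rw [SimpleGraph.Walk.length_append, SimpleGraph.Walk.length_reverse, hW, hW'] at h1
      have := hkb u
      have := hkb v
      omega

/-- There is a constant `c > 0` such that every finite tree `T` on `n ≥ 1` vertices admits a
partition of its vertex set into at most `⌈√n⌉` parts, each of which induces a connected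
subtree of `T` of unweighted diameter at most `c·√n`. -/
theorem tree_partition_exists :
    ∃ c : ℝ, 0 < c ∧
      ∀ (V : Type) [Fintype V] (T : SimpleGraph V), T.IsTree → 1 ≤ Fintype.card V →
      ∃ P : Finset (Set V),
        Setoid.IsPartition (↑P : Set (Set V)) ∧
        P.card ≤ ⌈Real.sqrt (Fintype.card V)⌉₊ ∧
        ∀ F ∈ P, (T.induce F).Connected ∧
          ((T.induce F).diam : ℝ) ≤ c * Real.sqrt (Fintype.card V) := by
  refine ⟨8, by norm_num, ?_⟩
  intro V _ T hT hn
  have hn' : (1:ℝ) ≤ Fintype.card V := by exact_mod_cast hn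
  have hs : 1 ≤ Real.sqrt (Fintype.card V) := Real.one_le_sqrt.2 hn'
  have hle := Nat.le_ceil (Real.sqrt (Fintype.card V))
  have hlt := Nat.ceil_lt_add_one (Real.sqrt_nonneg (Fintype.card V))
  have hsq := Real.mul_self_sqrt (show (0:ℝ) ≤ Fintype.card V by linarith)
  obtain ⟨P, h1, h2, h3⟩ := tp_aux V T hT.1 ⌈Real.sqrt (Fintype.card V)⌉₊
    (by
      have : (1:ℝ) ≤ ⌈Real.sqrt (Fintype.card V)⌉₊ := by linarith
      exact_mod_cast this)
    (by
      have : (Fintype.card V : ℝ) ≤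
          ⌈Real.sqrt (Fintype.card V)⌉₊ * ⌈Real.sqrt (Fintype.card V)⌉₊ := by
        nlinarith
      exact_mod_cast this)
  refine ⟨P, h1, h2, fun F hF => ⟨(h3 F hF).1, ?_⟩⟩
  have h4 : ((T.induce F).diam : ℝ) ≤ 4 * ⌈Real.sqrt (Fintype.card V)⌉₊ := by
    exact_mod_cast (h3 F hF).2
  linarith
end

section
/- Let G be a finite simple graph, P a partition of the vertex set of G, A a set of parts of P, and for each part F ∈ A let e(F) be an edge of G with exactly one endpoint in F. Let H be the fragment graph, S the set of selected H-edges, M a matching of H contained in S that is maximal among matchings contained in S, and let K be the marked edge set. Then (a) every connected component of the spanning subgraph of H with edge set K that contains at least one edge has diameter at most 3, and (b) every part F ∈ A is an endpoint of some edge of K. -/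
/- A partition of the vertex set of `G` is modeled by a surjection `f : V → ι`;
the parts are the fibers `f ⁻¹' {i}`. `A : Set ι` is a set of parts, and for
each part `i ∈ A`, `e i : V × V` is a selected edge of `G` with exactly one
endpoint in the part `i` (namely `(e i).1`). -/

/-- The fragment graph `H`: its vertices are the parts, and two distinct parts are
adjacent iff some selected edge has one endpoint in each of them. -/
def fragmentGraph {V ι : Type*} (f : V → ι) (A : Set ι) (e : ι → V × V) : SimpleGraph ι :=
  SimpleGraph.fromRel (fun i j => ∃ k ∈ A, f (e k).1 = i ∧ f (e k).2 = j)

/-- The set `S` of `H`-edges arising from the selected edges. -/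
def selectedEdges {V ι : Type*} (f : V → ι) (A : Set ι) (e : ι → V × V) : Set (Sym2 ι) :=
  {s | ∃ k ∈ A, s = s(f (e k).1, f (e k).2)}

/-- `M` is a matching of the graph `H`: a set of edges of `H`, no two distinct edges of
which share an endpoint. -/
def IsMatchingIn {ι : Type*} (H : SimpleGraph ι) (M : Set (Sym2 ι)) : Prop :=
  M ⊆ H.edgeSet ∧ ∀ e₁ ∈ M, ∀ e₂ ∈ M, e₁ ≠ e₂ → ∀ x : ι, x ∈ e₁ → x ∉ e₂

/-- A part `i` is covered by the matching `M` if it is an endpoint of some edge of `M`. -/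
def coveredBy {ι : Type*} (M : Set (Sym2 ι)) (i : ι) : Prop := ∃ s ∈ M, i ∈ s

/-- The marked edge set `K`: the matching `M` together with, for each part of `A` not
covered by `M`, the `H`-edge arising from its selected edge. -/
def markedEdges {V ι : Type*} (f : V → ι) (A : Set ι) (e : ι → V × V)
    (M : Set (Sym2 ι)) : Set (Sym2 ι) :=
  M ∪ {s | ∃ k ∈ A, ¬ coveredBy M k ∧ s = s(f (e k).1, f (e k).2)}

/-- (a) Every connected component of the spanning subgraph of `H` with edge set `K`
(the marked edges) containing at least one edge has diameter at most `3`, and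
(b) every part `F ∈ A` is an endpoint of some edge of `K`. -/
theorem marked_components_diameter_le_three {V ι : Type*} [Fintype V]
    (G : SimpleGraph V) (f : V → ι) (hf : Function.Surjective f)
    (A : Set ι) (e : ι → V × V)
    (he : ∀ i ∈ A, G.Adj (e i).1 (e i).2 ∧ f (e i).1 = i ∧ f (e i).2 ≠ i)
    (M : Set (Sym2 ι))
    (hM : IsMatchingIn (fragmentGraph f A e) M)
    (hMS : M ⊆ selectedEdges f A e)
    (hmax : ∀ M' : Set (Sym2 ι), IsMatchingIn (fragmentGraph f A e) M' →
      M' ⊆ selectedEdges f A e → M ⊆ M' → M' = M)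
    (K : Set (Sym2 ι)) (hK : K = markedEdges f A e M) :
    (∀ C : (SimpleGraph.fromEdgeSet K).ConnectedComponent,
      (∃ u v : ι, u ∈ C.supp ∧ v ∈ C.supp ∧ (SimpleGraph.fromEdgeSet K).Adj u v) →
      ∀ u ∈ C.supp, ∀ v ∈ C.supp, (SimpleGraph.fromEdgeSet K).dist u v ≤ 3) ∧
    (∀ i ∈ A, ∃ s ∈ K, i ∈ s) := by
  classical
  subst hK
  have hcov : ∀ k ∈ A, ¬ coveredBy M k → coveredBy M (f (e k).2) := by
    intro k hk hnk
    by_contra hn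
    obtain ⟨-, h1, h2⟩ := he k hk
    have hmem : s(f (e k).1, f (e k).2) ∈ M := by
      have := hmax (insert s(f (e k).1, f (e k).2) M) ?_ ?_ (Set.subset_insert _ _)
      · rw [← this]; exact Set.mem_insert _ _
      · refine ⟨?_, ?_⟩
        · intro s hs
          rcases hs with rfl | hs
          · rw [SimpleGraph.mem_edgeSet, fragmentGraph, SimpleGraph.fromRel_adj]
            exact ⟨by rw [h1]; exact h2.symm, Or.inl ⟨k, hk, rfl, rfl⟩⟩
          · exact hM.1 hs
        · have key : ∀ s ∈ M, ∀ x, x ∈ s(f (e k).1, f (e k).2) → x ∉ s := by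
            intro s hs x hx hxs
            rw [h1, Sym2.mem_iff] at hx
            rcases hx with rfl | rfl
            · exact hnk ⟨s, hs, hxs⟩
            · exact hn ⟨s, hs, hxs⟩
          intro e₁ h₁ e₂ h₂ hne x hx1 hx2
          rcases h₁ with rfl | h₁ <;> rcases h₂ with rfl | h₂
          · exact hne rfl
          · exact key _ h₂ x hx1 hx2
          · exact key _ h₁ x hx2 hx1
          · exact hM.2 _ h₁ _ h₂ hne x hx1 hx2
      · intro s hs
        rcases hs with rfl | hs
        · exact ⟨k, hk, rfl⟩
        · exact hMS hs
    exact hnk ⟨_, hmem, by rw [h1]; exact Sym2.mem_mk_left _ _⟩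
  set Γ := SimpleGraph.fromEdgeSet (markedEdges f A e M) with hΓ
  have hAdj : ∀ x y, Γ.Adj x y → s(x, y) ∈ M ∨
      (¬ coveredBy M x ∧ coveredBy M y ∧ y = f (e x).2) ∨
      (¬ coveredBy M y ∧ coveredBy M x ∧ x = f (e y).2) := by
    intro x y h
    rw [hΓ, SimpleGraph.fromEdgeSet_adj] at h
    obtain ⟨h | ⟨k, hk, hnk, h⟩, -⟩ := h
    · exact Or.inl h
    · have hc := hcov k hk hnk
      rw [(he k hk).2.1, Sym2.eq_iff] at h
      rcases h with ⟨rfl, rfl⟩ | ⟨rfl, rfl⟩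
      · exact Or.inr (Or.inl ⟨hnk, hc, rfl⟩)
      · exact Or.inr (Or.inr ⟨hnk, hc, rfl⟩)
  have huniq : ∀ a b y, s(a, b) ∈ M → s(a, y) ∈ M → y = b := by
    intro a b y h1 h2
    by_contra hne
    refine hM.2 _ h1 _ h2 ?_ a (Sym2.mem_mk_left _ _) (Sym2.mem_mk_left _ _)
    intro h
    exact hne (Sym2.congr_right.1 h).symm
  have hcl : ∀ a b, s(a, b) ∈ M → ∀ x y, Γ.Adj x y →
      (x = a ∨ x = b ∨ (¬ coveredBy M x ∧ (Γ.Adj x a ∨ Γ.Adj x b))) →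
      (y = a ∨ y = b ∨ (¬ coveredBy M y ∧ (Γ.Adj y a ∨ Γ.Adj y b))) := by
    intro a b hab x y hxy hx
    have ca : coveredBy M a := ⟨_, hab, Sym2.mem_mk_left _ _⟩
    have cb : coveredBy M b := ⟨_, hab, Sym2.mem_mk_right _ _⟩
    have un : ∀ c, coveredBy M c → ¬ coveredBy M x → Γ.Adj x c → y = c := by
      intro c hc hnx hxc
      have aux : ∀ z, Γ.Adj x z → z = f (e x).2 := by
        intro z hz
        rcases hAdj _ _ hz with h | h | h
        · exact absurd ⟨_, h, Sym2.mem_mk_left _ _⟩ hnx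
        · exact h.2.2
        · exact absurd h.2.1 hnx
      rw [aux y hxy, aux c hxc]
    rcases hx with rfl | rfl | ⟨hnx, h | h⟩
    · rcases hAdj _ _ hxy with h | h | h
      · exact Or.inr (Or.inl (huniq _ _ _ hab h))
      · exact absurd ca h.1
      · exact Or.inr (Or.inr ⟨h.1, Or.inl hxy.symm⟩)
    · rcases hAdj _ _ hxy with h | h | h
      · exact Or.inl (huniq _ _ _ (by rw [Sym2.eq_swap]; exact hab) h)
      · exact absurd cb h.1
      · exact Or.inr (Or.inr ⟨h.1, Or.inr hxy.symm⟩)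
    · exact Or.inl (un a ca hnx h)
    · exact Or.inr (Or.inl (un b cb hnx h))
  have hT : ∀ a b, s(a, b) ∈ M → ∀ x y, Γ.Reachable x y →
      (x = a ∨ x = b ∨ (¬ coveredBy M x ∧ (Γ.Adj x a ∨ Γ.Adj x b))) →
      (y = a ∨ y = b ∨ (¬ coveredBy M y ∧ (Γ.Adj y a ∨ Γ.Adj y b))) := by
    rintro a b hab x y ⟨p⟩ hx
    induction p with
    | nil => exact hx
    | cons h p ih => exact ih (hcl a b hab _ _ h hx)
  refine ⟨?_, ?_⟩
  · rintro C ⟨u₀, v₀, hu₀, hv₀, h₀⟩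
    have hc : ∃ a, a ∈ C.supp ∧ coveredBy M a := by
      rcases hAdj _ _ h₀ with h | h | h
      · exact ⟨u₀, hu₀, _, h, Sym2.mem_mk_left _ _⟩
      · exact ⟨v₀, hv₀, h.2.1⟩
      · exact ⟨u₀, hu₀, h.2.1⟩
    obtain ⟨a, haC, s, hs, has⟩ := hc
    obtain ⟨b, rfl⟩ := Sym2.mem_iff_exists.1 has
    have hab : Γ.Adj a b := by
      rw [hΓ, SimpleGraph.fromEdgeSet_adj]
      exact ⟨Or.inl hs, ((SimpleGraph.mem_edgeSet _).1 (hM.1 hs)).ne⟩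
    have hnear : ∀ x ∈ C.supp, ∃ p, (p = a ∨ p = b) ∧ ∃ w : Γ.Walk x p, w.length ≤ 1 := by
      intro x hx
      have hr : Γ.Reachable a x := by
        rw [SimpleGraph.ConnectedComponent.mem_supp_iff] at hx haC
        exact SimpleGraph.ConnectedComponent.exact (haC.trans hx.symm)
      rcases hT a b hs a x hr (Or.inl rfl) with rfl | rfl | ⟨-, h | h⟩
      · exact ⟨x, Or.inl rfl, .nil, by simp⟩
      · exact ⟨x, Or.inr rfl, .nil, by simp⟩
      · exact ⟨a, Or.inl rfl, h.toWalk, by simp⟩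
      · exact ⟨b, Or.inr rfl, h.toWalk, by simp⟩
    intro u hu v hv
    obtain ⟨p, hp, w, hw⟩ := hnear u hu
    obtain ⟨q, hq, w', hw'⟩ := hnear v hv
    have hpq : ∃ m : Γ.Walk p q, m.length ≤ 1 := by
      rcases hp with rfl | rfl <;> rcases hq with rfl | rfl
      · exact ⟨.nil, by simp⟩
      · exact ⟨hab.toWalk, by simp⟩
      · exact ⟨hab.symm.toWalk, by simp⟩
      · exact ⟨.nil, by simp⟩
    obtain ⟨m, hm⟩ := hpq
    have := SimpleGraph.dist_le ((w.append m).append w'.reverse)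
    simp only [SimpleGraph.Walk.length_append, SimpleGraph.Walk.length_reverse] at this
    omega
  · intro i hi
    by_cases h : coveredBy M i
    · obtain ⟨s, hs, his⟩ := h
      exact ⟨s, Or.inl hs, his⟩
    · exact ⟨_, Or.inr ⟨i, hi, h, rfl⟩, by rw [(he i hi).2.1]; exact Sym2.mem_mk_left _ _⟩
end

section
/- Let G be a finite connected simple graph and P a partition of the vertex set of G into parts, each inducing a connected subgraph of G and each of weak diameter at most D₀ in G. Let d ≤ D₀, let A be the set of parts of P of weak diameter at most d, and for each F ∈ A let e(F) be an edge of G with exactly one endpoint in F. Let H be the fragment graph, S the set of selected H-edges, M a matching of H contained in S that is maximal among matchings contained in S, and K the marked edge set. Then every connected component C of the spanning subgraph of H with edge set K satisfies: (a) C contains at most one part of weak diameter greater than d, and (b) the union of the parts lying in C has weak diameter at most D₀ + 3d + 3 in G. -/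
/-- The vertex subset `s` has weak diameter at most `d` in `G`: every two of its
vertices are at distance at most `d` in `G`. -/
def WeakDiamLE {V : Type*} (G : SimpleGraph V) (s : Set V) (d : ℕ) : Prop :=
  ∀ u ∈ s, ∀ v ∈ s, G.dist u v ≤ d

/-- Let `G` be connected, with all parts inducing connected subgraphs of weak diameter
at most `D₀`, let `d ≤ D₀`, let `A` be the set of parts of weak diameter at most `d`,
with a selected outgoing edge for each part of `A`, and let `K` be the marked edge set
obtained from a maximal matching `M ⊆ S` of the fragment graph. Then every connected
component `C` of the spanning subgraph of `H` with edge set `K` satisfies: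
(a) `C` contains at most one part of weak diameter greater than `d`, and
(b) the union of the parts lying in `C` has weak diameter at most `D₀ + 3d + 3` in `G`. -/
theorem marked_components_weak_diameter {V ι : Type*} [Fintype V]
    (G : SimpleGraph V) (hG : G.Connected)
    (f : V → ι) (hf : Function.Surjective f)
    (D₀ d : ℕ) (hdD : d ≤ D₀)
    (hpartconn : ∀ i : ι, (G.induce (f ⁻¹' {i})).Connected)
    (hpartdiam : ∀ i : ι, WeakDiamLE G (f ⁻¹' {i}) D₀)
    (A : Set ι) (hA : A = {i : ι | WeakDiamLE G (f ⁻¹' {i}) d})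
    (e : ι → V × V)
    (he : ∀ i ∈ A, G.Adj (e i).1 (e i).2 ∧ f (e i).1 = i ∧ f (e i).2 ≠ i)
    (M : Set (Sym2 ι))
    (hM : IsMatchingIn (fragmentGraph f A e) M)
    (hMS : M ⊆ selectedEdges f A e)
    (hmax : ∀ M' : Set (Sym2 ι), IsMatchingIn (fragmentGraph f A e) M' →
      M' ⊆ selectedEdges f A e → M ⊆ M' → M' = M)
    (K : Set (Sym2 ι)) (hK : K = markedEdges f A e M) :
    ∀ C : (SimpleGraph.fromEdgeSet K).ConnectedComponent,
      (∀ i ∈ C.supp, ∀ j ∈ C.supp,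
        ¬ WeakDiamLE G (f ⁻¹' {i}) d → ¬ WeakDiamLE G (f ⁻¹' {j}) d → i = j) ∧
      WeakDiamLE G (⋃ i ∈ C.supp, f ⁻¹' {i}) (D₀ + 3 * d + 3) := by
  classical
  -- uncovered parts of `A` have covered targets
  have hcov : ∀ k ∈ A, ¬ coveredBy M k → coveredBy M (f (e k).2) := by
    intro k hk hnk
    by_contra hnt
    obtain ⟨h1, h2, h3⟩ := he k hk
    have hmem : s(k, f (e k).2) ∈ M := by
      have := hmax (insert s(k, f (e k).2) M) ?_ ?_ (Set.subset_insert _ _)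
      · rw [← this]; exact Set.mem_insert _ _
      · refine ⟨?_, ?_⟩
        · intro s hs
          rcases hs with rfl | hs
          · rw [SimpleGraph.mem_edgeSet, fragmentGraph, SimpleGraph.fromRel_adj]
            exact ⟨fun h => h3 h.symm, Or.inl ⟨k, hk, h2, rfl⟩⟩
          · exact hM.1 hs
        · intro e₁ he₁ e₂ he₂ hne x hx1 hx2
          rcases he₁ with rfl | he₁ <;> rcases he₂ with rfl | he₂
          · exact hne rfl
          · rcases Sym2.mem_iff.1 hx1 with rfl | rfl
            · exact hnk ⟨_, he₂, hx2⟩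
            · exact hnt ⟨_, he₂, hx2⟩
          · rcases Sym2.mem_iff.1 hx2 with rfl | rfl
            · exact hnk ⟨_, he₁, hx1⟩
            · exact hnt ⟨_, he₁, hx1⟩
          · exact hM.2 _ he₁ _ he₂ hne x hx1 hx2
      · intro s hs
        rcases hs with rfl | hs
        · exact ⟨k, hk, by rw [h2]⟩
        · exact hMS hs
    exact hnk ⟨_, hmem, Sym2.mem_mk_left _ _⟩
  -- description of marked adjacency
  have hadj : ∀ i j, (SimpleGraph.fromEdgeSet K).Adj i j →
      s(i, j) ∈ M ∨ (i ∈ A ∧ ¬ coveredBy M i ∧ j = f (e i).2) ∨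
        (j ∈ A ∧ ¬ coveredBy M j ∧ i = f (e j).2) := by
    intro i j h
    rw [SimpleGraph.fromEdgeSet_adj, hK] at h
    rcases h.1 with h | ⟨k, hk, hnk, h⟩
    · exact Or.inl h
    · rw [(he k hk).2.1, Sym2.eq_iff] at h
      rcases h with ⟨rfl, h⟩ | ⟨h, rfl⟩
      · exact Or.inr (Or.inl ⟨hk, hnk, h⟩)
      · exact Or.inr (Or.inr ⟨hk, hnk, h⟩)
  have hMform : ∀ i, coveredBy M i → ∃ a ∈ A, s(a, f (e a).2) ∈ M ∧
      (i = a ∨ i = f (e a).2) := by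
    rintro i ⟨s, hs, his⟩
    obtain ⟨a, ha, rfl⟩ := hMS hs
    rw [(he a ha).2.1] at hs his
    exact ⟨a, ha, hs, Sym2.mem_iff.1 his⟩
  intro C
  have hCreach : ∀ i ∈ C.supp, ∀ j ∈ C.supp, (SimpleGraph.fromEdgeSet K).Reachable i j := by
    intro i hi j hj
    rw [SimpleGraph.ConnectedComponent.mem_supp_iff] at hi hj
    exact SimpleGraph.ConnectedComponent.exact (hi.trans hj.symm)
  have hinv : ∀ Q : ι → Prop,
      (∀ i j, Q i → (SimpleGraph.fromEdgeSet K).Adj i j → Q j) →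
      ∀ i ∈ C.supp, Q i → ∀ j ∈ C.supp, Q j := by
    intro Q hQ i hi hQi j hj
    obtain ⟨w⟩ := hCreach i hi j hj
    clear hi hj
    induction w with
    | nil => exact hQi
    | cons h _ ih => exact ih (hQ _ _ hQi h)
  -- structure of the component
  have hstruct : (∀ i ∈ C.supp, ∀ j ∈ C.supp, i = j) ∨
      ∃ a ∈ A, ∀ i ∈ C.supp, i = a ∨ i = f (e a).2 ∨
        (i ∈ A ∧ ¬ coveredBy M i ∧ (f (e i).2 = a ∨ f (e i).2 = f (e a).2)) := by
    by_cases hex : ∃ i ∈ C.supp, coveredBy M i ∨ i ∈ A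
    · right
      obtain ⟨i, hi, hia⟩ := hex
      have : ∃ a ∈ A, s(a, f (e a).2) ∈ M ∧ (i = a ∨ i = f (e a).2 ∨
        (i ∈ A ∧ ¬ coveredBy M i ∧ (f (e i).2 = a ∨ f (e i).2 = f (e a).2))) := by
        by_cases hc : coveredBy M i
        · obtain ⟨a, ha, h1, h2⟩ := hMform i hc
          exact ⟨a, ha, h1, by tauto⟩
        · have hiA : i ∈ A := by tauto
          obtain ⟨a, ha, h1, h2⟩ := hMform _ (hcov i hiA hc)
          exact ⟨a, ha, h1, Or.inr (Or.inr ⟨hiA, hc, h2⟩)⟩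
      obtain ⟨a, ha, haM, hQi⟩ := this
      refine ⟨a, ha, hinv (fun i => i = a ∨ i = f (e a).2 ∨
        (i ∈ A ∧ ¬ coveredBy M i ∧ (f (e i).2 = a ∨ f (e i).2 = f (e a).2))) ?_ i hi hQi⟩
      intro p q hp hpq
      rcases hadj p q hpq with h | ⟨hpA, hnp, rfl⟩ | ⟨hqA, hnq, rfl⟩
      · have hpc : coveredBy M p := ⟨_, h, Sym2.mem_mk_left _ _⟩
        have hp' : p ∈ s(a, f (e a).2) := by rw [Sym2.mem_iff]; tauto
        have heq : s(p, q) = s(a, f (e a).2) := by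
          by_contra hne
          exact hM.2 _ h _ haM hne p (Sym2.mem_mk_left _ _) hp'
        have hq : q ∈ s(a, f (e a).2) := heq ▸ Sym2.mem_mk_right p q
        rw [Sym2.mem_iff] at hq
        tauto
      · have hac : coveredBy M a := ⟨_, haM, Sym2.mem_mk_left _ _⟩
        have htc : coveredBy M (f (e a).2) := ⟨_, haM, Sym2.mem_mk_right _ _⟩
        rcases hp with rfl | rfl | ⟨_, _, h⟩
        · exact absurd hac hnp
        · exact absurd htc hnp
        · tauto
      · have := hcov q hqA hnq
        exact Or.inr (Or.inr ⟨hqA, hnq, by tauto⟩)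
    · left
      push Not at hex
      intro i hi j hj
      refine (hinv (fun j => j = i) ?_ i hi rfl j hj).symm
      rintro p q rfl hpq
      obtain ⟨h1, h2⟩ := hex p hi
      rcases hadj p q hpq with h | ⟨hpA, hnp, rfl⟩ | ⟨hqA, hnq, rfl⟩
      · exact absurd ⟨_, h, Sym2.mem_mk_left _ _⟩ h1
      · exact absurd hpA h2
      · exact absurd (hcov q hqA hnq) h1
  have hAd : ∀ i ∈ A, WeakDiamLE G (f ⁻¹' {i}) d := by
    intro i hi; rw [hA] at hi; exact hi
  rcases hstruct with hone | ⟨a, ha, hall⟩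
  · refine ⟨fun i hi j hj _ _ => hone i hi j hj, ?_⟩
    intro u hu v hv
    simp only [Set.mem_iUnion] at hu hv
    obtain ⟨i, hi, hu⟩ := hu
    obtain ⟨j, hj, hv⟩ := hv
    obtain rfl := hone i hi j hj
    have := hpartdiam i u hu v hv
    omega
  · constructor
    · have key : ∀ i ∈ C.supp, ¬ WeakDiamLE G (f ⁻¹' {i}) d → i = f (e a).2 := by
        intro i hi hn
        rcases hall i hi with rfl | h | h
        · exact absurd (hAd _ ha) hn
        · exact h
        · exact absurd (hAd _ h.1) hn
      intro i hi j hj hni hnj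
      rw [key i hi hni, key j hj hnj]
    · have hout : ∀ i ∈ A, ∀ x, f x = i → G.dist x (e i).2 ≤ d + 1 := by
        intro i hi x hx
        have h1 := hAd i hi x hx (e i).1 (he i hi).2.1
        have h2 := SimpleGraph.dist_eq_one_iff_adj.2 (he i hi).1
        have h3 := hG.dist_triangle (u := x) (v := (e i).1) (w := (e i).2)
        omega
      have hnear : ∀ x, f x ∈ C.supp → ∃ y, (f y = a ∨ f y = f (e a).2) ∧
          G.dist x y ≤ d + 1 := by
        intro x hx
        rcases hall _ hx with h | h | ⟨h1, _, h2⟩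
        · exact ⟨x, Or.inl h, by simp⟩
        · exact ⟨x, Or.inr h, by simp⟩
        · exact ⟨_, h2, hout _ h1 x rfl⟩
      have hcore : ∀ y z, (f y = a ∨ f y = f (e a).2) → (f z = a ∨ f z = f (e a).2) →
          G.dist y z ≤ d + 1 + D₀ := by
        intro y z hy hz
        rcases hy with hy | hy <;> rcases hz with hz | hz
        · have := hpartdiam _ y hy z hz
          omega
        · have h1 := hout a ha y hy
          have h2 := hpartdiam (f (e a).2) (e a).2 rfl z hz
          have h3 := hG.dist_triangle (u := y) (v := (e a).2) (w := z)
          omega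
        · have h1 := hout a ha z hz
          have h2 := hpartdiam (f (e a).2) (e a).2 rfl y hy
          have h3 := hG.dist_triangle (u := z) (v := (e a).2) (w := y)
          rw [SimpleGraph.dist_comm]
          omega
        · have := hpartdiam _ y hy z hz
          omega
      intro u hu v hv
      simp only [Set.mem_iUnion] at hu hv
      obtain ⟨i, hi, rfl⟩ := hu
      obtain ⟨j, hj, rfl⟩ := hv
      obtain ⟨y, hy, huy⟩ := hnear u hi
      obtain ⟨z, hz, hvz⟩ := hnear v hj
      have h1 := hcore y z hy hz
      have h2 := hG.dist_triangle (u := u) (v := y) (w := v)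
      have h3 := hG.dist_triangle (u := y) (v := z) (w := v)
      rw [SimpleGraph.dist_comm (u := v)] at hvz
      omega
end

section
/- Let G be a finite simple graph and P a partition of the vertex set of G in which every part has at least s vertices. Let A be a set of parts of P, and for each F ∈ A let e(F) be an edge of G with exactly one endpoint in F. Let H be the fragment graph, S the set of selected H-edges, M a matching of H contained in S that is maximal among matchings contained in S, and K the marked edge set. Then every connected component of the spanning subgraph of H with edge set K that contains a part of A contains at least two parts, and hence the union of the parts lying in such a component has at least 2s vertices. -/
/-- If every part of the partition has at least `s` vertices, then every connected
component of the spanning subgraph of `H` with edge set `K` (the marked edges) that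
contains a part of `A` contains at least two parts, and hence the union of the parts
lying in such a component has at least `2·s` vertices. -/
theorem marked_components_size {V ι : Type*} [Fintype V]
    (G : SimpleGraph V) (f : V → ι) (hf : Function.Surjective f)
    (s : ℕ) (hs : ∀ i : ι, s ≤ (f ⁻¹' {i}).ncard)
    (A : Set ι) (e : ι → V × V)
    (he : ∀ i ∈ A, G.Adj (e i).1 (e i).2 ∧ f (e i).1 = i ∧ f (e i).2 ≠ i)
    (M : Set (Sym2 ι))
    (hM : IsMatchingIn (fragmentGraph f A e) M)
    (hMS : M ⊆ selectedEdges f A e)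
    (hmax : ∀ M' : Set (Sym2 ι), IsMatchingIn (fragmentGraph f A e) M' →
      M' ⊆ selectedEdges f A e → M ⊆ M' → M' = M)
    (K : Set (Sym2 ι)) (hK : K = markedEdges f A e M) :
    ∀ C : (SimpleGraph.fromEdgeSet K).ConnectedComponent,
      (∃ i ∈ C.supp, i ∈ A) →
      (∃ i ∈ C.supp, ∃ j ∈ C.supp, i ≠ j) ∧
      2 * s ≤ (⋃ i ∈ C.supp, f ⁻¹' {i}).ncard := by
  intro C hC
  obtain ⟨i, hiC, hiA⟩ := hC
  have key : ∃ j, j ≠ i ∧ s(i, j) ∈ K := by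
    subst hK
    by_cases hc : coveredBy M i
    · obtain ⟨t, htM, hit⟩ := hc
      obtain ⟨j, rfl⟩ := Sym2.mem_iff_exists.mp hit
      have hadj := hM.1 htM
      rw [SimpleGraph.mem_edgeSet] at hadj
      exact ⟨j, hadj.ne.symm, Or.inl htM⟩
    · refine ⟨f (e i).2, (he i hiA).2.2, Or.inr ⟨i, hiA, hc, ?_⟩⟩
      rw [(he i hiA).2.1]
  obtain ⟨j, hji, hjK⟩ := key
  have hjC : j ∈ C.supp := by
    have hadj : (SimpleGraph.fromEdgeSet K).Adj j i := by
      rw [SimpleGraph.fromEdgeSet_adj, Sym2.eq_swap]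
      exact ⟨hjK, hji⟩
    rw [SimpleGraph.ConnectedComponent.mem_supp_iff] at hiC ⊢
    rw [← hiC]
    exact SimpleGraph.ConnectedComponent.sound hadj.reachable
  refine ⟨⟨i, hiC, j, hjC, hji.symm⟩, ?_⟩
  have hdisj : Disjoint (f ⁻¹' {i}) (f ⁻¹' {j}) := by
    rw [Set.disjoint_left]
    intro x hx hx2
    exact hji (hx2.symm.trans hx)
  have hsub : f ⁻¹' {i} ∪ f ⁻¹' {j} ⊆ ⋃ i ∈ C.supp, f ⁻¹' {i} :=
    Set.union_subset (Set.subset_biUnion_of_mem (u := fun i => f ⁻¹' {i}) hiC)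
      (Set.subset_biUnion_of_mem (u := fun i => f ⁻¹' {i}) hjC)
  have h1 := Set.ncard_le_ncard hsub (Set.toFinite _)
  rw [Set.ncard_union_eq hdisj (Set.toFinite _) (Set.toFinite _)] at h1
  have h2 := hs i
  have h3 := hs j
  omega
end

section
/- There exists a constant c > 0 such that for every finite connected simple graph G on n ≥ 2 vertices and all integers κ ≥ 1 and W ≥ 1, there exists a finite collection C of vertex subsets of G (called clusters) with the following three properties: (1) every cluster induces a connected subgraph of G whose unweighted diameter is at most c·κ·W; (2) every vertex of G belongs to at most c·κ·n^{1/κ}·log n clusters; (3) for every vertex v of G there is a cluster containing every vertex at distance at most W from v. -/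
namespace SNC

variable {V : Type} (G : SimpleGraph V)

/-- Ball of radius `r` around `v` inside the subgraph induced by `H`. -/
def Bl (H : Set V) (v : V) (r : ℕ) : Set V :=
  {u | ∃ p : G.Walk v u, p.length ≤ r ∧ ∀ x ∈ p.support, x ∈ H}

theorem self_mem {H : Set V} {v : V} (hv : v ∈ H) (r : ℕ) : v ∈ Bl G H v r :=
  ⟨SimpleGraph.Walk.nil, by simp, by simpa using hv⟩

theorem Bl_sub {H : Set V} {v : V} {r : ℕ} : Bl G H v r ⊆ H := by
  rintro u ⟨p, _, hp⟩
  exact hp u p.end_mem_support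

theorem Bl_trans {H : Set V} {v u w : V} {r s : ℕ} (h1 : u ∈ Bl G H v r)
    (p : G.Walk u w) (hl : p.length ≤ s) (hp : ∀ x ∈ p.support, x ∈ H) :
    w ∈ Bl G H v (r + s) := by
  obtain ⟨q, hq, hqs⟩ := h1
  refine ⟨q.append p, by rw [SimpleGraph.Walk.length_append]; omega, ?_⟩
  intro x hx
  rw [SimpleGraph.Walk.mem_support_append_iff] at hx
  rcases hx with hx | hx
  · exact hqs x hx
  · exact hp x hx

theorem walk_in (H : Set V) (v : V) (r : ℕ) {u : V} (p : G.Walk v u) (hl : p.length ≤ r)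
    (hp : ∀ x ∈ p.support, x ∈ H) : ∀ x ∈ p.support, x ∈ Bl G H v r := by
  classical
  intro x hx
  refine ⟨p.takeUntil x hx, (p.length_takeUntil_le hx).trans hl, fun y hy => ?_⟩
  exact hp y (p.support_takeUntil_subset_support hx hy)

theorem Bl_conn [Finite V] {H : Set V} {v : V} (hv : v ∈ H) (r : ℕ) :
    (G.induce (Bl G H v r)).Connected ∧ (G.induce (Bl G H v r)).diam ≤ 2 * r := by
  have key : ∀ u : Bl G H v r, ∃ p : (G.induce (Bl G H v r)).Walk ⟨v, self_mem G hv r⟩ u,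
      p.length ≤ r := by
    rintro ⟨u, p, hl, hp⟩
    refine ⟨p.induce _ (walk_in G H v r p hl hp), ?_⟩
    have := congrArg SimpleGraph.Walk.length
      (SimpleGraph.Walk.map_induce p (walk_in G H v r p hl hp))
    rw [SimpleGraph.Walk.length_map] at this
    exact this.trans_le hl
  have hc : (G.induce (Bl G H v r)).Connected := by
    rw [SimpleGraph.connected_iff_exists_forall_reachable]
    exact ⟨⟨v, self_mem G hv r⟩, fun u => ⟨(key u).choose⟩⟩
  refine ⟨hc, ?_⟩
  haveI := hc.nonempty
  obtain ⟨a, b, hab⟩ := (G.induce (Bl G H v r)).exists_dist_eq_diam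
  rw [← hab]
  obtain ⟨p, hp⟩ := key a
  obtain ⟨q, hq⟩ := key b
  have := SimpleGraph.dist_le (p.reverse.append q)
  rw [SimpleGraph.Walk.length_append, SimpleGraph.Walk.length_reverse] at this
  omega

/-- a `W`-ball contained in `H`: all points reached by walks inside `H`. -/
theorem walk_of_dist (hG : G.Connected) {H : Set V} {u w : V} {W : ℕ}
    (hu : ∀ x, G.dist x u ≤ W → x ∈ H) (hw : G.dist w u ≤ W) :
    ∃ p : G.Walk u w, p.length ≤ W ∧ ∀ x ∈ p.support, x ∈ H := by
  classical
  obtain ⟨p, hp⟩ := hG.exists_walk_length_eq_dist u w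
  rw [SimpleGraph.dist_comm] at hw
  refine ⟨p, by omega, fun x hx => hu x ?_⟩
  rw [SimpleGraph.dist_comm]
  have h1 := SimpleGraph.dist_le (p.takeUntil x hx)
  have h2 := p.length_takeUntil_le hx
  omega

theorem growth (a : ℕ → ℕ) (κ n : ℕ) (r : ℝ) (hr : 0 < r) (hrn : r ^ κ = n)
    (h0 : 1 ≤ a 0) (hκ : a κ ≤ n) (hk : 1 ≤ κ) :
    ∃ j < κ, (a (j + 1) : ℝ) ≤ r * a j := by
  by_contra! h
  have h1 : ∀ j ≤ κ, r ^ j ≤ a j ∧ (1 ≤ j → r ^ j < a j) := by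
    intro j
    induction j with
    | zero => intro _; simp; exact_mod_cast h0
    | succ j ih =>
      intro hj
      have h2 := (ih (by omega)).1
      have h3 := h j (by omega)
      have : r ^ (j + 1) < a (j + 1) := by
        rw [pow_succ']
        exact (mul_le_mul_of_nonneg_left h2 hr.le).trans_lt h3
      exact ⟨this.le, fun _ => this⟩
  have h2 := (h1 κ le_rfl).2 hk
  rw [hrn] at h2
  have : n < a κ := by exact_mod_cast h2
  omega

open Classical in
theorem phase [Fintype V] (hG : G.Connected) (κ W : ℕ) (hk : 1 ≤ κ) (r : ℝ) (hr : 0 < r)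
    (hrn : r ^ κ = Fintype.card V) : ∀ (m : ℕ) (U : Finset V) (H : Set V), U.card ≤ m →
    (∀ u ∈ U, ∀ x, G.dist x u ≤ W → x ∈ H) →
    ∃ (C : Finset (Set V)) (D : Finset V), D ⊆ U ∧
      (∀ s ∈ C, s ⊆ H ∧ (G.induce s).Connected ∧ (G.induce s).diam ≤ 4 * κ * W) ∧
      (∀ v : V, (C.filter (fun s => v ∈ s)).card ≤ 1) ∧
      (∀ v ∈ D, ∃ s ∈ C, ∀ u : V, G.dist u v ≤ W → u ∈ s) ∧
      (U.card : ℝ) ≤ r * D.card := by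
  intro m
  induction m with
  | zero =>
    intro U H hU _
    refine ⟨∅, ∅, by simp, by simp, by simp, by simp, ?_⟩
    simp at hU
    simp [hU]
  | succ m ih =>
    intro U H hU hH
    rcases U.eq_empty_or_nonempty with rfl | ⟨v, hv⟩
    · exact ⟨∅, ∅, by simp, by simp, by simp, by simp, by simp⟩
    have hvH : v ∈ H := hH v hv v (by simp)
    obtain ⟨j, hj, hjr⟩ := growth (fun j => (U.filter (· ∈ Bl G H v (2 * j * W))).card) κ
      (Fintype.card V) r hr hrn
      (Finset.card_pos.2 ⟨v, by simp [hv, self_mem G hvH]⟩) (Finset.card_le_univ _) hk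
    set S := Bl G H v ((2 * j + 1) * W) with hS
    set A := U.filter (· ∈ Bl G H v (2 * j * W)) with hA
    set B := U.filter (· ∈ Bl G H v (2 * (j + 1) * W)) with hB
    have hvB : v ∈ B := by simp [hB, hv, self_mem G hvH]
    have hBU : B ⊆ U := Finset.filter_subset _ _
    have hAB : A ⊆ B := by
      intro x hx
      simp only [hA, hB, Finset.mem_filter] at hx ⊢
      obtain ⟨h1, p, hp, hp'⟩ := hx
      exact ⟨h1, p, hp.trans (Nat.mul_le_mul_right _ (by omega)), hp'⟩
    have hcard : (U \ B).card + B.card = U.card := Finset.card_sdiff_add_card_eq_card hBU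
    have hBpos : 0 < B.card := Finset.card_pos.2 ⟨v, hvB⟩
    obtain ⟨C, D, hD, h1, h2, h3, h4⟩ := ih (U \ B) (H \ S) (by omega) (by
      intro u hu x hx
      simp only [Finset.mem_sdiff] at hu
      refine ⟨hH u hu.1 x hx, fun hxS => hu.2 ?_⟩
      simp only [hB, Finset.mem_filter]
      refine ⟨hu.1, ?_⟩
      obtain ⟨p, hp, hp'⟩ := walk_of_dist G hG (hH u hu.1) hx
      have := Bl_trans G hxS p.reverse (s := W) (by simpa using hp) (by simpa using hp')
      convert this using 1
      ring)
    refine ⟨insert S C, A ∪ D, ?_, ?_, ?_, ?_, ?_⟩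
    · exact Finset.union_subset (hAB.trans hBU) (hD.trans Finset.sdiff_subset)
    · intro s hs
      rcases Finset.mem_insert.1 hs with rfl | hs
      · refine ⟨Bl_sub G, (Bl_conn G hvH _).1, (Bl_conn G hvH _).2.trans ?_⟩
        rw [← mul_assoc]
        exact Nat.mul_le_mul_right _ (by omega)
      · exact ⟨(h1 s hs).1.trans Set.diff_subset, (h1 s hs).2⟩
    · intro x
      by_cases hx : x ∈ S
      · have : C.filter (fun s => x ∈ s) = ∅ := by
          apply Finset.filter_eq_empty_iff.2
          intro s hs hxs
          exact ((h1 s hs).1 hxs).2 hx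
        rw [Finset.filter_insert, if_pos hx, this]
        simp
      · rw [Finset.filter_insert, if_neg hx]
        exact h2 x
    · intro u hu
      rcases Finset.mem_union.1 hu with hu | hu
      · refine ⟨S, Finset.mem_insert_self _ _, fun x hx => ?_⟩
        simp only [hA, Finset.mem_filter] at hu
        obtain ⟨p, hp, hp'⟩ := walk_of_dist G hG (hH u hu.1) hx
        have := Bl_trans G hu.2 p hp hp'
        rw [hS]
        convert this using 1
        ring
      · obtain ⟨s, hs, h⟩ := h3 u hu
        exact ⟨s, Finset.mem_insert_of_mem hs, h⟩
    · have hdis : Disjoint A D := by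
        refine Finset.disjoint_left.2 fun x hx hx' => ?_
        exact (Finset.mem_sdiff.1 (hD hx')).2 (hAB hx)
      rw [Finset.card_union_of_disjoint hdis, ← hcard]
      push_cast
      have : (B.card : ℝ) ≤ r * A.card := hjr
      linarith

open Classical in
theorem iter [Fintype V] (hG : G.Connected) (κ W : ℕ) (hk : 1 ≤ κ) (r : ℝ) (hr : 1 ≤ r)
    (hrn : r ^ κ = Fintype.card V) : ∀ (t : ℕ), 
    ∃ (C : Finset (Set V)) (U : Finset V),
      (∀ s ∈ C, (G.induce s).Connected ∧ (G.induce s).diam ≤ 4 * κ * W) ∧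
      (∀ v : V, (C.filter (fun s => v ∈ s)).card ≤ t) ∧
      (∀ v ∉ U, ∃ s ∈ C, ∀ u : V, G.dist u v ≤ W → u ∈ s) ∧
      (U.card : ℝ) ≤ (1 - 1 / r) ^ t * Fintype.card V := by
  intro t
  induction t with
  | zero => exact ⟨∅, Finset.univ, by simp, by simp, by simp, by simp⟩
  | succ t ih =>
    obtain ⟨C, U, h1, h2, h3, h4⟩ := ih
    obtain ⟨C', D, hD, g1, g2, g3, g4⟩ := phase G hG κ W hk r (by linarith) hrn U.card U Set.univ
      le_rfl (by simp)
    refine ⟨C ∪ C', U \ D, ?_, ?_, ?_, ?_⟩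
    · intro s hs
      rcases Finset.mem_union.1 hs with hs | hs
      · exact h1 s hs
      · exact (g1 s hs).2
    · intro v
      rw [Finset.filter_union]
      exact (Finset.card_union_le _ _).trans (Nat.add_le_add (h2 v) (g2 v))
    · intro v hv
      by_cases hvU : v ∈ U
      · obtain ⟨s, hs, h⟩ := g3 v (by by_contra h; exact hv (Finset.mem_sdiff.2 ⟨hvU, h⟩))
        exact ⟨s, Finset.mem_union_right _ hs, h⟩
      · obtain ⟨s, hs, h⟩ := h3 v hvU
        exact ⟨s, Finset.mem_union_left _ hs, h⟩
    · have hc : ((U \ D).card : ℝ) + D.card = U.card := by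
        exact_mod_cast Finset.card_sdiff_add_card_eq_card hD
      have hr0 : 0 < r := by linarith
      have e1 : (U.card : ℝ) / r ≤ D.card := by
        rw [div_le_iff₀ hr0]; linarith
      have e2 : 0 ≤ 1 - 1 / r := by
        rw [sub_nonneg, div_le_one hr0]; exact hr
      calc ((U \ D).card : ℝ) ≤ (1 - 1 / r) * U.card := by
            have : (1 - 1 / r) * U.card = U.card - U.card / r := by ring
            linarith
        _ ≤ (1 - 1 / r) * ((1 - 1 / r) ^ t * Fintype.card V) := by gcongr
        _ = _ := by ring

end SNC

open Classical in
/-- There is a constant `c > 0` such that every finite connected simple graph `G` on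
`n ≥ 2` vertices admits, for all integers `κ, W ≥ 1`, a sparse `(κ, W)`-neighborhood
cover: a finite collection `C` of vertex subsets (clusters) such that
(1) every cluster induces a connected subgraph of `G` of unweighted diameter at most
`c·κ·W` (depth property);
(2) every vertex belongs to at most `c·κ·n^{1/κ}·log n` clusters (sparsity property);
(3) for every vertex `v` some cluster contains the whole ball of radius `W` around `v`
(neighborhood property). -/
theorem sparse_neighborhood_cover_exists :
    ∃ c : ℝ, 0 < c ∧
      ∀ (V : Type) [Fintype V] (G : SimpleGraph V) (κ W : ℕ),
        G.Connected → 2 ≤ Fintype.card V → 1 ≤ κ → 1 ≤ W →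
        ∃ C : Finset (Set V),
          (∀ s ∈ C, (G.induce s).Connected ∧
            ((G.induce s).diam : ℝ) ≤ c * κ * W) ∧
          (∀ v : V, ((C.filter (fun s => v ∈ s)).card : ℝ) ≤
            c * κ * (Fintype.card V : ℝ) ^ (1 / (κ : ℝ)) * Real.log (Fintype.card V)) ∧
          (∀ v : V, ∃ s ∈ C, ∀ u : V, G.dist u v ≤ W → u ∈ s) := by
  refine ⟨4, by norm_num, ?_⟩
  intro V _ G κ W hG hn hk hW
  set n := Fintype.card V with hndef
  have hn' : (2 : ℝ) ≤ n := by exact_mod_cast hn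
  have hk0 : (1 : ℝ) ≤ κ := by exact_mod_cast hk
  set r : ℝ := (n : ℝ) ^ (1 / (κ : ℝ)) with hrdef
  have hr : 1 ≤ r := Real.one_le_rpow (by linarith) (by positivity)
  have hr0 : 0 < r := by linarith
  have hrn : r ^ κ = n := by
    rw [hrdef, one_div]
    exact Real.rpow_inv_natCast_pow (by positivity) (by omega)
  have hlog : (1 / 2 : ℝ) < Real.log n := by
    have h1 := Real.log_two_gt_d9
    have h2 := Real.log_le_log (by norm_num) hn'
    linarith
  obtain ⟨C, U, h1, h2, h3, h4⟩ := SNC.iter G hG κ W hk r hr hrn (⌊r * Real.log n⌋₊ + 1)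
  have hU : U = ∅ := by
    have e1 : 1 - 1 / r ≤ Real.exp (-(1 / r)) := by
      have := Real.add_one_le_exp (-(1 / r)); linarith
    have e2 : 0 ≤ 1 - 1 / r := by
      rw [sub_nonneg, div_le_one hr0]; exact hr
    have e3 : (1 - 1 / r) ^ (⌊r * Real.log n⌋₊ + 1) < (n : ℝ)⁻¹ := by
      refine (pow_le_pow_left₀ e2 e1 _).trans_lt ?_
      rw [← Real.exp_nat_mul, ← Real.exp_log (show (0 : ℝ) < (n : ℝ)⁻¹ by positivity),
        Real.exp_lt_exp, Real.log_inv]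
      have := Nat.lt_floor_add_one (r * Real.log n)
      push_cast
      rw [mul_neg, neg_lt_neg_iff, mul_one_div, lt_div_iff₀ hr0]
      linarith
    have e4 : (U.card : ℝ) < 1 := by
      refine h4.trans_lt ?_
      rw [← hndef]
      calc _ < (n : ℝ)⁻¹ * n := by gcongr
        _ = 1 := inv_mul_cancel₀ (by positivity)
    have : U.card < 1 := by exact_mod_cast e4
    exact Finset.card_eq_zero.1 (by omega)
  refine ⟨C, ?_, ?_, ?_⟩
  · intro s hs
    refine ⟨(h1 s hs).1, ?_⟩
    exact_mod_cast (h1 s hs).2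
  · intro v
    have a1 : ((C.filter (fun s => v ∈ s)).card : ℝ) ≤ ⌊r * Real.log n⌋₊ + 1 := by
      exact_mod_cast h2 v
    have a2 : (⌊r * Real.log n⌋₊ : ℝ) ≤ r * Real.log n := Nat.floor_le (by positivity)
    have a3 : (1 / 2 : ℝ) ≤ r * Real.log n := by nlinarith
    have a4 : r * Real.log n ≤ κ * (r * Real.log n) := le_mul_of_one_le_left (by linarith) hk0
    have a5 : 4 * (κ : ℝ) * r * Real.log n = 4 * (κ * (r * Real.log n)) := by ring
    rw [a5]
    linarith
  · intro v
    exact h3 v (by simp [hU])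
end

section
/- Let G be a finite connected simple graph with an injective real-valued edge-weight function, and let P be a partition of the vertex set of G into k ≥ 2 parts, each inducing a connected subgraph of G. Then every part F has a lightest outgoing edge loe(F), and the following hold: (a) for every part F, the edge loe(F) belongs to the unique minimum spanning tree of G; (b) merging the parts along these edges — i.e., taking the partition whose parts are the unions of the parts in each connected component of the simple graph on P in which two distinct parts are adjacent if and only if some loe(F) joins them — yields a partition with at most ⌊k/2⌋ parts. -/
theorem tree_swap {V : Type*} [Fintype V] (G : SimpleGraph V) (w : Sym2 V → ℝ)
    (hw : Set.InjOn w G.edgeSet) (T : SimpleGraph V) (hTG : T ≤ G) (hT : T.IsTree)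
    (hmin : ∀ T' : SimpleGraph V, T' ≤ G → T'.IsTree → mstWeight w T ≤ mstWeight w T')
    (S : Set V) (a b : V) (hab : G.Adj a b) (ha : a ∈ S) (hb : b ∉ S)
    (hl : ∀ u v : V, G.Adj u v → u ∈ S → v ∉ S → w s(a, b) ≤ w s(u, v)) :
    s(a, b) ∈ T.edgeSet := by
  classical
  by_contra hn
  obtain ⟨p, hp⟩ := (hT.1.preconnected a b).exists_isPath
  obtain ⟨d, hd, hdu, hdv⟩ := p.exists_boundary_dart S ha hb
  obtain ⟨⟨u, v⟩, huv⟩ := d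
  simp only at hdu hdv
  have hin : s(u, v) ∈ p.edges := by
    simp only [SimpleGraph.Walk.edges, List.mem_map]
    exact ⟨_, hd, rfl⟩
  have hne : s(a, b) ≠ s(u, v) := by
    intro h
    exact hn (h ▸ huv)
  have hlt : w s(a, b) < w s(u, v) := by
    refine lt_of_le_of_ne (hl u v (hTG huv) hdu hdv) ?_
    intro h
    exact hne (hw hab (hTG huv) h)
  let H := T ⊔ SimpleGraph.edge a b
  have hHab : H.Adj b a := by
    simp [H, SimpleGraph.edge_adj, hab.ne.symm]
  have hHT : T ≤ H := le_sup_left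
  have hHset : H.edgeSet = insert s(a, b) T.edgeSet := by
    simp only [H, SimpleGraph.edgeSet_sup, SimpleGraph.edgeSet_edge]
    ext e
    have := hab.ne
    simp only [Set.mem_union, Set.mem_sdiff, Set.mem_singleton_iff, Set.mem_insert_iff]
    constructor
    · tauto
    · rintro (rfl | h)
      · right; simp [this]
      · left; exact h
  have hHc : H.Connected := hT.1.mono hHT
  have hnb : ¬ H.IsBridge s(u, v) := by
    rw [SimpleGraph.isBridge_iff_forall_cycle_notMem (hHT huv)]
    intro h
    refine h (SimpleGraph.Walk.cons hHab (p.mapLe hHT)) ?_ ?_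
    · rw [SimpleGraph.Walk.cons_isCycle_iff]
      refine ⟨hp.mapLe hHT, ?_⟩
      intro hh
      simp at hh
      apply hn
      have := p.edges_subset_edgeSet hh
      rwa [Sym2.eq_swap]
    · simp [hin]
  have hc := hHc.connected_delete_edge_of_not_isBridge hnb
  let R := T.edgeSet \ {s(u, v)}
  have hR1 : T.edgeSet = insert s(u, v) R := by
    simp only [R, Set.insert_sdiff_singleton]
    exact (Set.insert_eq_of_mem (show s(u, v) ∈ T.edgeSet from huv)).symm
  have hR2 : (H.deleteEdges {s(u, v)}).edgeSet = insert s(a, b) R := by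
    rw [SimpleGraph.edgeSet_deleteEdges, hHset, Set.insert_sdiff_of_notMem _ (by simpa using hne)]
  have hRu : s(u, v) ∉ R := by simp [R]
  have hRa : s(a, b) ∉ R := fun h => hn h.1
  have hRf : R.Finite := Set.toFinite _
  have htree : (H.deleteEdges {s(u, v)}).IsTree := by
    rw [SimpleGraph.isTree_iff_connected_and_card] at hT ⊢
    refine ⟨hc, ?_⟩
    rw [← hT.2, hR1, hR2, Nat.card_coe_set_eq, Nat.card_coe_set_eq,
      Set.ncard_insert_of_notMem hRu, Set.ncard_insert_of_notMem hRa]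
  have hle : H.deleteEdges {s(u, v)} ≤ G := by
    refine (SimpleGraph.deleteEdges_le _).trans ?_
    rw [← SimpleGraph.edgeSet_subset_edgeSet, hHset]
    exact Set.insert_subset hab (SimpleGraph.edgeSet_subset_edgeSet.2 hTG)
  have := hmin _ hle htree
  rw [mstWeight, mstWeight, hR1, hR2, finsum_mem_insert _ hRu hRf,
    finsum_mem_insert _ hRa hRf] at this
  linarith

/-- Let `G` be a finite connected simple graph with injective real edge weights, and let a
partition of its vertex set into `k ≥ 2` parts (the fibers of a surjection `f : V → ι`),
each inducing a connected subgraph of `G`, be given. Then every part has a lightest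
outgoing edge `loe i`, and moreover:
(a) each `loe i` belongs to the (unique) minimum spanning tree of `G`;
(b) merging the parts along these edges — taking the partition whose parts are the unions
of the parts in each connected component of the graph on `ι` in which distinct parts are
adjacent iff some `loe` joins them — yields at most `⌊k/2⌋` parts. -/
theorem loe_merging {V ι : Type*} [Fintype V] [Fintype ι]
    (G : SimpleGraph V) (hG : G.Connected)
    (w : Sym2 V → ℝ) (hw : Set.InjOn w G.edgeSet)
    (f : V → ι) (hf : Function.Surjective f)
    (k : ℕ) (hk : Fintype.card ι = k) (hk2 : 2 ≤ k)
    (hconn : ∀ i : ι, (G.induce (f ⁻¹' {i})).Connected) :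
    ∃ loe : ι → V × V,
      (∀ i : ι, G.Adj (loe i).1 (loe i).2 ∧ f (loe i).1 = i ∧ f (loe i).2 ≠ i ∧
        ∀ u v : V, G.Adj u v → f u = i → f v ≠ i →
          w s((loe i).1, (loe i).2) ≤ w s(u, v)) ∧
      (∀ T : SimpleGraph V, T ≤ G → T.IsTree →
        (∀ T' : SimpleGraph V, T' ≤ G → T'.IsTree → mstWeight w T ≤ mstWeight w T') →
        ∀ i : ι, s((loe i).1, (loe i).2) ∈ T.edgeSet) ∧
      Nat.card (SimpleGraph.fromRel
          (fun i j : ι => ∃ k' : ι, f (loe k').1 = i ∧ f (loe k').2 = j)).ConnectedComponent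
        ≤ k / 2 := by
  classical
  have hex : ∀ i : ι, ∃ q : V × V, G.Adj q.1 q.2 ∧ f q.1 = i ∧ f q.2 ≠ i ∧
        ∀ u v : V, G.Adj u v → f u = i → f v ≠ i → w s(q.1, q.2) ≤ w s(u, v) := by
    intro i
    have : Nontrivial ι := Fintype.one_lt_card_iff_nontrivial.1 (by omega)
    obtain ⟨j, hj⟩ := exists_ne i
    obtain ⟨a, ha⟩ := hf i
    obtain ⟨b, hb⟩ := hf j
    obtain ⟨p⟩ := hG.preconnected a b
    obtain ⟨d, -, hdu, hdv⟩ := p.exists_boundary_dart (f ⁻¹' {i}) (by simp [ha])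
      (by simp [hb, hj])
    obtain ⟨q, hq, hq'⟩ := Set.exists_min_image
      {q : V × V | G.Adj q.1 q.2 ∧ f q.1 = i ∧ f q.2 ≠ i} (fun q => w s(q.1, q.2))
      (Set.toFinite _) ⟨(d.fst, d.snd), d.adj, by simpa using hdu, by simpa using hdv⟩
    exact ⟨q, hq.1, hq.2.1, hq.2.2, fun u v h1 h2 h3 => hq' (u, v) ⟨h1, h2, h3⟩⟩
  choose loe hloe using hex
  refine ⟨loe, hloe, ?_, ?_⟩
  · intro T hTG hT hmin i
    obtain ⟨h1, h2, h3, h4⟩ := hloe i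
    exact tree_swap G w hw T hTG hT hmin (f ⁻¹' {i}) _ _ h1 (by simpa using h2)
      (by simpa using h3) (fun u v h5 h6 h7 => h4 u v h5 (by simpa using h6) (by simpa using h7))
  · set M := SimpleGraph.fromRel
      (fun i j : ι => ∃ k' : ι, f (loe k').1 = i ∧ f (loe k').2 = j) with hM
    have hadj : ∀ i, M.Adj i (f (loe i).2) := by
      intro i
      rw [hM, SimpleGraph.fromRel_adj]
      exact ⟨(hloe i).2.2.1.symm, Or.inl ⟨i, (hloe i).2.1, rfl⟩⟩
    have hout : ∀ c : M.ConnectedComponent, ∃ i, M.connectedComponentMk i = c :=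
      fun c => c.exists_rep
    choose r hr using hout
    have hnext : ∀ c, M.connectedComponentMk (f (loe (r c)).2) = c := fun c =>
      (SimpleGraph.ConnectedComponent.eq.2 (hadj (r c)).reachable.symm).trans (hr c)
    let g : M.ConnectedComponent × Bool → ι := fun x => if x.2 then r x.1 else f (loe (r x.1)).2
    have hg : ∀ x, M.connectedComponentMk (g x) = x.1 := by
      rintro ⟨c, _ | _⟩
      · simpa [g] using hnext c
      · simpa [g] using hr c
    have hinj : Function.Injective g := by
      rintro ⟨c, x⟩ ⟨c', y⟩ h
      obtain rfl : c = c' := by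
        have h1 := hg (c, x)
        rw [h, hg] at h1
        exact h1.symm
      have hne := (hloe (r c)).2.2.1
      cases x <;> cases y <;> simp_all [g]
    have := Nat.card_le_card_of_injective g hinj
    rw [Nat.card_prod, Nat.card_eq_fintype_card (α := Bool), Fintype.card_bool,
      Nat.card_eq_fintype_card (α := ι), hk] at this
    omega
end

section
/- Let G be a finite connected simple graph with an injective real-valued edge-weight function, let T be its unique minimum spanning tree, and let P be a partition of the vertex set of G into k ≥ 2 parts, each inducing a connected subgraph of T. Merge the parts along their lightest outgoing edges, i.e., take the partition whose parts are the unions of the parts in each connected component of the simple graph on P in which two distinct parts are adjacent if and only if the lightest outgoing edge of some part joins them. Then every part of the merged partition again induces a connected subgraph of T. -/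
theorem cut_edge_mem_mst {V : Type*} [Fintype V]
    (G : SimpleGraph V) (w : Sym2 V → ℝ) (hw : Set.InjOn w G.edgeSet)
    (T : SimpleGraph V) (hTG : T ≤ G) (hT : T.IsTree)
    (hmin : ∀ T' : SimpleGraph V, T' ≤ G → T'.IsTree → mstWeight w T ≤ mstWeight w T')
    (S : Set V) (a b : V) (hab : G.Adj a b) (ha : a ∈ S) (hb : b ∉ S)
    (hl : ∀ u v : V, G.Adj u v → u ∈ S → v ∉ S → w s(a, b) ≤ w s(u, v)) :
    T.Adj a b := by
  classical
  by_contra hn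
  obtain ⟨p, hp⟩ := (hT.connected.preconnected a b).exists_isPath
  obtain ⟨d, hd, hdS, hdS'⟩ := p.exists_boundary_dart S ha hb
  obtain ⟨⟨u, v⟩, huv⟩ := d
  simp only at hdS hdS' huv
  have hmem : s(u, v) ∈ p.edges := List.mem_map.2 ⟨_, hd, rfl⟩
  have hne : s(a, b) ≠ s(u, v) := by
    intro h
    apply hn
    rw [← SimpleGraph.mem_edgeSet, h]
    exact huv
  have hlt : w s(a, b) < w s(u, v) := by
    refine lt_of_le_of_ne (hl u v (hTG huv) hdS hdS') fun h => hne (hw hab (hTG huv) h)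
  set H := T ⊔ SimpleGraph.edge a b with hH
  have hTH : T ≤ H := le_sup_left
  have hHab : H.Adj b a := by
    right
    rw [SimpleGraph.edge_adj]
    exact ⟨Or.inr ⟨rfl, rfl⟩, hab.ne'⟩
  have hHconn : H.Connected := hT.connected.mono hTH
  have hnb : ¬ H.IsBridge s(u, v) := by
    intro hbr
    have hc : (SimpleGraph.Walk.cons hHab (p.mapLe hTH)).IsCycle := by
      rw [SimpleGraph.Walk.cons_isCycle_iff]
      refine ⟨hp.mapLe hTH, ?_⟩
      rw [SimpleGraph.Walk.edges_mapLe_eq_edges, Sym2.eq_swap]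
      intro h
      exact hn (p.edges_subset_edgeSet h)
    apply hbr.notMem_edges_of_isCycle hc
    rw [SimpleGraph.Walk.edges_cons, SimpleGraph.Walk.edges_mapLe_eq_edges]
    exact List.mem_cons_of_mem _ hmem
  have hconn := hHconn.connected_delete_edge_of_not_isBridge hnb
  set T' := H.deleteEdges {s(u, v)} with hT'
  have hE : T'.edgeSet = insert s(a, b) (T.edgeSet \ {s(u, v)}) := by
    rw [hT', SimpleGraph.edgeSet_deleteEdges, hH, SimpleGraph.edgeSet_sup,
      SimpleGraph.edgeSet_edge_of_ne hab.ne]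
    ext e
    simp only [Set.mem_sdiff, Set.mem_union, Set.mem_singleton_iff, Set.mem_insert_iff]
    constructor
    · tauto
    · rintro (rfl | h)
      · exact ⟨Or.inr rfl, hne⟩
      · tauto
  have hE2 : T.edgeSet = insert s(u, v) (T.edgeSet \ {s(u, v)}) := by
    rw [Set.insert_sdiff_singleton, Set.insert_eq_of_mem]
    exact huv
  have hn1 : s(a, b) ∉ T.edgeSet \ {s(u, v)} := fun h => hn h.1
  have hn2 : s(u, v) ∉ T.edgeSet \ {s(u, v)} := fun h => h.2 rfl
  have hfin : (T.edgeSet \ {s(u, v)}).Finite := Set.toFinite _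
  have hT'tree : T'.IsTree := by
    rw [SimpleGraph.isTree_iff_connected_and_card]
    refine ⟨hconn, ?_⟩
    rw [← (SimpleGraph.isTree_iff_connected_and_card.1 hT).2]
    have h1 := Set.ncard_insert_of_notMem hn1 hfin
    have h2 := Set.ncard_insert_of_notMem hn2 hfin
    rw [← hE] at h1
    rw [← hE2] at h2
    rw [Nat.card_coe_set_eq, Nat.card_coe_set_eq, h1, h2]
  have hT'G : T' ≤ G := by
    refine (SimpleGraph.deleteEdges_le _).trans (sup_le hTG ?_)
    rw [SimpleGraph.edge_le_iff]
    exact Or.inr hab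
  have h := hmin T' hT'G hT'tree
  unfold mstWeight at h
  rw [hE, finsum_mem_insert _ hn1 hfin, hE2, finsum_mem_insert _ hn2 hfin, ← hE2] at h
  linarith

/-- Let `G` be a finite connected simple graph with injective real edge weights, `T` its
(unique) minimum spanning tree, and let the vertex set be partitioned into `k ≥ 2` parts
(the fibers of a surjection `f : V → ι`), each inducing a connected subgraph of `T`.
Let `loe i` be the lightest outgoing edge of the part `i`. Merging the parts along these
edges — taking the unions of the parts over each connected component of the graph on the
parts in which distinct parts are adjacent iff some `loe` joins them — every part of the
merged partition again induces a connected subgraph of `T`. -/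
theorem merged_parts_connected_in_mst {V ι : Type*} [Fintype V] [Fintype ι]
    (G : SimpleGraph V) (hG : G.Connected)
    (w : Sym2 V → ℝ) (hw : Set.InjOn w G.edgeSet)
    (T : SimpleGraph V) (hTG : T ≤ G) (hT : T.IsTree)
    (hmin : ∀ T' : SimpleGraph V, T' ≤ G → T'.IsTree → mstWeight w T ≤ mstWeight w T')
    (f : V → ι) (hf : Function.Surjective f) (hk2 : 2 ≤ Fintype.card ι)
    (hconn : ∀ i : ι, (T.induce (f ⁻¹' {i})).Connected)
    (loe : ι → V × V)
    (hloe : ∀ i : ι, G.Adj (loe i).1 (loe i).2 ∧ f (loe i).1 = i ∧ f (loe i).2 ≠ i ∧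
      ∀ u v : V, G.Adj u v → f u = i → f v ≠ i →
        w s((loe i).1, (loe i).2) ≤ w s(u, v)) :
    ∀ C : (SimpleGraph.fromRel
        (fun i j : ι => ∃ k' : ι, f (loe k').1 = i ∧ f (loe k').2 = j)).ConnectedComponent,
      (T.induce (⋃ i ∈ C.supp, f ⁻¹' {i})).Connected := by
  have hadj : ∀ k : ι, T.Adj (loe k).1 (loe k).2 := by
    intro k
    obtain ⟨h1, h2, h3, h4⟩ := hloe k
    exact cut_edge_mem_mst G w hw T hTG hT hmin (f ⁻¹' {k}) _ _ h1 h2 h3 h4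
  generalize hR : SimpleGraph.fromRel
        (fun i j : ι => ∃ k' : ι, f (loe k').1 = i ∧ f (loe k').2 = j) = R
  intro C
  have hmem : ∀ x : V, f x ∈ C.supp → x ∈ ⋃ i ∈ C.supp, f ⁻¹' {i} := by
    intro x hx
    simp only [Set.mem_iUnion]
    exact ⟨f x, hx, rfl⟩
  have hfib : ∀ (x y : V) (hx : f x ∈ C.supp) (hy : f y ∈ C.supp), f x = f y →
      (T.induce (⋃ i ∈ C.supp, f ⁻¹' {i})).Reachable ⟨x, hmem x hx⟩ ⟨y, hmem y hy⟩ := by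
    intro x y hx hy hxy
    have hsub : f ⁻¹' {f y} ≤ ⋃ i ∈ C.supp, f ⁻¹' {i} := by
      intro z hz
      apply hmem
      rw [show f z = f y from hz]
      exact hy
    have h := (hconn (f y)).preconnected ⟨x, hxy⟩ ⟨y, rfl⟩
    exact h.map (T.induceHomOfLE hsub).toHom
  have hwalk : ∀ (i j : ι) (p : R.Walk i j), ∀ (x y : V) (hx : f x ∈ C.supp) (hy : f y ∈ C.supp),
      f x = i → f y = j →
      (T.induce (⋃ i ∈ C.supp, f ⁻¹' {i})).Reachable ⟨x, hmem x hx⟩ ⟨y, hmem y hy⟩ := by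
    intro i j p
    induction p with
    | nil =>
      intro x y hx hy h1 h2
      exact hfib x y hx hy (h1.trans h2.symm)
    | @cons i j' j h p ih =>
      intro x y hx hy h1 h2
      have hj' : j' ∈ C.supp := C.mem_supp_of_adj_mem_supp (h1 ▸ hx) h
      have key : ∃ a b : V, T.Adj a b ∧ f a = i ∧ f b = j' := by
        rw [← hR, SimpleGraph.fromRel_adj] at h
        obtain ⟨_, ⟨k, hk1, hk2⟩ | ⟨k, hk1, hk2⟩⟩ := h
        · exact ⟨_, _, hadj k, hk1, hk2⟩
        · exact ⟨_, _, (hadj k).symm, hk2, hk1⟩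
      obtain ⟨a, b, hab, ha, hb⟩ := key
      have ha' : f a ∈ C.supp := by rw [ha, ← h1]; exact hx
      have hb' : f b ∈ C.supp := by rw [hb]; exact hj'
      have hab' : (T.induce (⋃ i ∈ C.supp, f ⁻¹' {i})).Adj ⟨a, hmem a ha'⟩ ⟨b, hmem b hb'⟩ := hab
      exact ((hfib x a hx ha' (h1.trans ha.symm)).trans hab'.reachable).trans
        (ih b y hb' hy hb h2)
  rw [SimpleGraph.connected_iff]
  constructor
  · rintro ⟨x, hx⟩ ⟨y, hy⟩
    have hx' : f x ∈ C.supp := by simpa using hx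
    have hy' : f y ∈ C.supp := by simpa using hy
    obtain ⟨p⟩ := SimpleGraph.ConnectedComponent.exact (hx'.trans hy'.symm)
    exact hwalk _ _ p x y hx' hy' rfl rfl
  · obtain ⟨i, hi⟩ := C.nonempty_supp
    obtain ⟨x, rfl⟩ := hf i
    exact ⟨⟨x, hmem x hi⟩⟩
end
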